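/- Let T ∈ (0,∞] and let λ : [0,T) → ℝ be continuous with λ(0) = 0, twice continuously differentiable on the open interval (0,T), and satisfying the self-similarity equation. Then λ is twice differentiable from the right at 0, and λ′ and λ″ extend continuously to [0,T); i.e., λ ∈ C²([0,T)). -/

import Mathlib

/-!
Fix any `t₀ ∈ (0,T)`. The self-similarity equation at `t₀` expresses `l s`, for small `s ≥ 0`, as
`r * (l (t₀ + s / r²) - l t₀)`. The latter is `C²` in `s` on a full neighbourhood of `0`, because
`l` is `C²` near the interior point `t₀`; hence `l` is `C²` up to the endpoint `0`.
-/

/-- The domain `[0,T)` of a driving function, for `T ∈ (0,∞]`. -/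
def drivingDomain (T : EReal) : Set ℝ := {t : ℝ | 0 ≤ t ∧ (t : EReal) < T}

/-- A driving function `l : [0,T) → ℝ` (with `l 0 = 0`) satisfies the self-similarity
equation if for every `t ∈ [0,T)` there is `r > 0` with
`r * (l (t + s / r²) - l t) = l s` for all `s ∈ [0, r² (T - t))`. -/
def SelfSimilarDriving (T : EReal) (l : ℝ → ℝ) : Prop :=
  ∀ t : ℝ, 0 ≤ t → (t : EReal) < T →
    ∃ r : ℝ, 0 < r ∧ ∀ s : ℝ, 0 ≤ s → ((t + s / r ^ 2 : ℝ) : EReal) < T →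
      r * (l (t + s / r ^ 2) - l t) = l s

/-- The regularity bootstrap from the proof of Theorem 3.2: if `λ` is continuous on
`[0,T)`, vanishes at `0`, is `C²` on the open interval `(0,T)`, and satisfies the
self-similarity equation, then `λ` is `C²` on all of `[0,T)` (i.e. `λ` is twice
differentiable from the right at `0` and `λ'`, `λ''` extend continuously to `[0,T)`). -/
theorem selfSimilar_regularity_at_zero
    (T : EReal) (hT : 0 < T) (l : ℝ → ℝ)
    (hcont : ContinuousOn l (drivingDomain T))
    (h0 : l 0 = 0)
    (hC2open : ContDiffOn ℝ 2 l {t : ℝ | 0 < t ∧ (t : EReal) < T})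
    (hss : SelfSimilarDriving T l) :
    ContDiffOn ℝ 2 l (drivingDomain T) := by
  have hopen : IsOpen {t : ℝ | 0 < t ∧ (t : EReal) < T} :=
    (isOpen_lt continuous_const continuous_id).inter
      (isOpen_lt continuous_coe_real_ereal continuous_const)
  have hAt : ∀ t : ℝ, 0 < t → (t : EReal) < T → ContDiffAt ℝ 2 l t := fun t h1 h2 =>
    hC2open.contDiffAt (hopen.mem_nhds ⟨h1, h2⟩)
  intro t ht
  rcases ht.1.eq_or_lt with rfl | hpos
  · obtain ⟨t₀, ht₀, ht₀T⟩ := EReal.lt_iff_exists_real_btwn.1 hT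
    have ht₀pos : 0 < t₀ := by exact_mod_cast ht₀
    obtain ⟨r, hr, heq⟩ := hss t₀ ht₀pos.le ht₀T
    have hg : ContDiffAt ℝ 2 (fun s : ℝ => r * (l (t₀ + s / r ^ 2) - l t₀)) 0 := by
      have hin : ContDiffAt ℝ 2 (fun s : ℝ => t₀ + s / r ^ 2) 0 := by fun_prop
      have hcomp : ContDiffAt ℝ 2 (fun s : ℝ => l (t₀ + s / r ^ 2)) 0 :=
        ContDiffAt.comp (g := l) 0 (by simpa using hAt t₀ ht₀pos ht₀T) hin
      exact contDiffAt_const.mul (hcomp.sub contDiffAt_const)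
    -- The constraint `t₀ + s / r² < T` is open in `s` and holds at `s = 0`.
    have hev : ∀ᶠ s : ℝ in nhds 0, ((t₀ + s / r ^ 2 : ℝ) : EReal) < T := by
      have hc : Continuous (fun s : ℝ => ((t₀ + s / r ^ 2 : ℝ) : EReal)) :=
        continuous_coe_real_ereal.comp (by fun_prop)
      exact (isOpen_lt hc continuous_const).mem_nhds (by simpa using ht₀T)
    refine hg.contDiffWithinAt.congr_of_eventuallyEq ?_ (by simp [h0])
    filter_upwards [self_mem_nhdsWithin, mem_nhdsWithin_of_mem_nhds hev] with s hs hsT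
    exact (heq s hs.1 hsT).symm
  · exact (hAt t hpos ht.2).contDiffWithinAt
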